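/- arXiv:1105.4489 — 2 statements merged into one kernel-verified Lean document; each statement's English description precedes it below -/
import Mathlib

section
/- Let μ̃ be the skew-symmetric bilinear map on ℝ⁷ with nonzero brackets [e_1,e_2] = (√611/94)e_3, [e_1,e_3] = (√235/47)e_5, [e_1,e_5] = (√611/94)e_6, [e_2,e_3] = (√235/94)e_4, [e_2,e_4] = (√611/94)e_6, [e_2,e_6] = (√705/94)e_7, [e_3,e_5] = −(√705/94)e_7. Then μ̃ satisfies the Jacobi identity, (ℝ⁷, μ̃) is a nilpotent Lie algebra, D = diag(1,1,2,3,3,4,5) is a derivation of μ̃, and m(μ̃) = diag(−23/47, −23/47, −27/94, −4/47, −4/47, 11/94, 15/47) = −(65/94) I + (19/94) D; in particular μ̃ is an Einstein nilradical. -/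
open Matrix BigOperators Polynomial

noncomputable section

abbrev Law (n : ℕ) := (Fin n → ℝ) → (Fin n → ℝ) → (Fin n → ℝ)

/-- `i`-th canonical basis vector of `ℝ^n`. -/
def bVec {n : ℕ} (i : Fin n) : Fin n → ℝ := Pi.single i 1

def IsBilin {n : ℕ} (μ : Law n) : Prop :=
  (∀ X, IsLinearMap ℝ (μ X)) ∧ (∀ Y, IsLinearMap ℝ (fun X => μ X Y))

def IsSkew {n : ℕ} (μ : Law n) : Prop := ∀ X Y, μ X Y = - μ Y X

def IsJacobi {n : ℕ} (μ : Law n) : Prop :=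
  ∀ X Y Z, μ (μ X Y) Z + μ (μ Y Z) X + μ (μ Z X) Y = 0

def IsLieLaw {n : ℕ} (μ : Law n) : Prop := IsBilin μ ∧ IsSkew μ ∧ IsJacobi μ

/-- lower central series of the law `μ`. -/
def lcs {n : ℕ} (μ : Law n) : ℕ → Submodule ℝ (Fin n → ℝ)
  | 0 => ⊤
  | k + 1 => Submodule.span ℝ {z | ∃ x y, y ∈ lcs μ k ∧ z = μ x y}

def IsNilpotentLaw {n : ℕ} (μ : Law n) : Prop :=
  IsLieLaw μ ∧ ∃ k, lcs μ k = ⊥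

/-- the action of `GL_n(ℝ)` on laws: `(g·μ)(X,Y) = g μ(g⁻¹X, g⁻¹Y)`. -/
def act {n : ℕ} (g : GL (Fin n) ℝ) (μ : Law n) : Law n :=
  fun X Y =>
    (g : Matrix (Fin n) (Fin n) ℝ).mulVec
      (μ (((g⁻¹ : GL (Fin n) ℝ) : Matrix (Fin n) (Fin n) ℝ).mulVec X)
         (((g⁻¹ : GL (Fin n) ℝ) : Matrix (Fin n) (Fin n) ℝ).mulVec Y))

def IsDerivation {n : ℕ} (μ : Law n) (ψ : Matrix (Fin n) (Fin n) ℝ) : Prop :=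
  ∀ X Y, ψ.mulVec (μ X Y) = μ (ψ.mulVec X) Y + μ X (ψ.mulVec Y)

/-- the unnormalized moment map `m(μ) = 4 Ric_μ`, as a matrix in the canonical basis. -/
def momentMap {n : ℕ} (μ : Law n) : Matrix (Fin n) (Fin n) ℝ :=
  Matrix.of fun k l =>
    4 * (-(1/2) * ∑ i, ∑ j, μ (bVec k) (bVec i) j * μ (bVec l) (bVec i) j
      + (1/4) * ∑ i, ∑ j, μ (bVec i) (bVec j) k * μ (bVec i) (bVec j) l)

def IsEinsteinNilradical {n : ℕ} (μ : Law n) : Prop :=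
  ∃ g : GL (Fin n) ℝ, ∃ c : ℝ, ∃ φ : Matrix (Fin n) (Fin n) ℝ,
    c < 0 ∧ φ.IsSymm ∧ IsDerivation (act g μ) φ ∧
    momentMap (act g μ) = c • (1 : Matrix (Fin n) (Fin n) ℝ) + φ

/-- build a (bilinear) law from a table `c` of structure constants on the
canonical basis, antisymmetrized: `[e_i, e_j] = c i j - c j i`. -/
def mkLaw {n : ℕ} (c : Fin n → Fin n → Fin n → ℝ) : Law n :=
  fun X Y k => ∑ i, ∑ j, X i * Y j * (c i j k - c j i k)

/-- structure constants of the law `μ̃` from Example 1 (a nilsoliton law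
isomorphic to `g_{1.17}`). -/
def cTilde : Fin 7 → Fin 7 → Fin 7 → ℝ := fun i j =>
  if i = 0 ∧ j = 1 then Pi.single 2 (Real.sqrt 611 / 94)
  else if i = 0 ∧ j = 2 then Pi.single 4 (Real.sqrt 235 / 47)
  else if i = 0 ∧ j = 4 then Pi.single 5 (Real.sqrt 611 / 94)
  else if i = 1 ∧ j = 2 then Pi.single 3 (Real.sqrt 235 / 94)
  else if i = 1 ∧ j = 3 then Pi.single 5 (Real.sqrt 611 / 94)
  else if i = 1 ∧ j = 5 then Pi.single 6 (Real.sqrt 705 / 94)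
  else if i = 2 ∧ j = 4 then Pi.single 6 (-(Real.sqrt 705 / 94))
  else 0

/-- the law `μ̃`. -/
def lawTilde : Law 7 := mkLaw cTilde

/-!
The brackets of `μ̃` are homogeneous for degrees in `ℕ × ZMod 2` that are pairwise distinct on the
canonical basis. Everything except the Jacobi identity and the seven diagonal entries of the moment
map follows from this: an additive real-valued function of the degree is a diagonal
derivation, positivity of the `ℕ`-component forces nilpotency, and since the entry `m(μ)_{kl}`
vanishes when `e_k` and `e_l` have different degrees, `m(μ̃)` is diagonal. The `ZMod 2`-component is
what separates `e₁` from `e₂` and `e₄` from `e₅`.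
-/

section Law

variable {n : ℕ} {μ : Law n}

theorem IsBilin.sum_bVec (hμ : IsBilin μ) (X Y : Fin n → ℝ) :
    μ X Y = ∑ i, ∑ j, (X i * Y j) • μ (bVec i) (bVec j) := by
  have expand_right (X) : μ X Y = ∑ j, Y j • μ X (bVec j) := by
    conv_lhs => rw [pi_eq_sum_univ' Y]
    exact (map_sum (hμ.1 X).mk' _ _).trans (Finset.sum_congr rfl fun j _ ↦ (hμ.1 X).map_smul _ _)
  have expand_left (Y) : μ X Y = ∑ i, X i • μ (bVec i) Y := by
    conv_lhs => rw [pi_eq_sum_univ' X]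
    exact (map_sum (hμ.2 Y).mk' _ _).trans (Finset.sum_congr rfl fun i _ ↦ (hμ.2 Y).map_smul _ _)
  simp only [expand_left Y, expand_right (bVec _), Finset.smul_sum, smul_smul]

theorem IsBilin.apply_eq_sum (hμ : IsBilin μ) (X Y : Fin n → ℝ) (k : Fin n) :
    μ X Y k = ∑ i, ∑ j, X i * Y j * μ (bVec i) (bVec j) k := by
  simp only [hμ.sum_bVec X Y, Finset.sum_apply, Pi.smul_apply, smul_eq_mul]

theorem IsDerivation.smul (hμ : IsBilin μ) {ψ : Matrix (Fin n) (Fin n) ℝ}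
    (hψ : IsDerivation μ ψ) (a : ℝ) : IsDerivation μ (a • ψ) := by
  intro X Y
  simp only [smul_mulVec, hψ X Y, (hμ.1 X).map_smul, (hμ.2 Y).map_smul, smul_add]

theorem act_one (μ : Law n) : act 1 μ = μ := by
  funext X Y
  simp [act]

theorem isEinsteinNilradical_of_momentMap_eq {c : ℝ} {φ : Matrix (Fin n) (Fin n) ℝ} (hc : c < 0)
    (hφ : φ.IsSymm) (hder : IsDerivation μ φ) (hm : momentMap μ = c • 1 + φ) :
    IsEinsteinNilradical μ :=
  ⟨1, c, φ, hc, hφ, by rwa [act_one], by rwa [act_one]⟩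

theorem isBilin_mkLaw (c : Fin n → Fin n → Fin n → ℝ) : IsBilin (mkLaw c) := by
  refine ⟨fun X ↦ ⟨fun Y Y' ↦ ?_, fun a Y ↦ ?_⟩, fun Y ↦ ⟨fun X X' ↦ ?_, fun a X ↦ ?_⟩⟩ <;>
    funext k <;>
    simp only [mkLaw, Pi.add_apply, Pi.smul_apply, smul_eq_mul, Finset.mul_sum,
      ← Finset.sum_add_distrib] <;>
    exact Finset.sum_congr rfl fun i _ ↦ Finset.sum_congr rfl fun j _ ↦ by ring

theorem isSkew_mkLaw (c : Fin n → Fin n → Fin n → ℝ) : IsSkew (mkLaw c) := by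
  intro X Y
  funext k
  simp only [mkLaw, Pi.neg_apply, ← Finset.sum_neg_distrib]
  rw [Finset.sum_comm]
  exact Finset.sum_congr rfl fun i _ ↦ Finset.sum_congr rfl fun j _ ↦ by ring

theorem mkLaw_bVec (c : Fin n → Fin n → Fin n → ℝ) (i j k : Fin n) :
    mkLaw c (bVec i) (bVec j) k = c i j k - c j i k := by
  simp [mkLaw, bVec, Pi.single_apply]

end Law

section Grading

variable {n : ℕ} {μ : Law n} {A : Type*}

/-- The law `μ` is graded when `e_i` is given degree `d i`, i.e. `[e_i, e_j]` is a combination of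
basis vectors of degree `d i + d j`. It is encoded by the support of the structure constants,
without forming the homogeneous components. -/
def IsGradedBy [Add A] (μ : Law n) (d : Fin n → A) : Prop :=
  ∀ ⦃i j k⦄, μ (bVec i) (bVec j) k ≠ 0 → d k = d i + d j

theorem isGradedBy_mkLaw [AddCommMagma A] {c : Fin n → Fin n → Fin n → ℝ} {d : Fin n → A}
    (hc : ∀ i j k, c i j k ≠ 0 → d k = d i + d j) : IsGradedBy (mkLaw c) d := by
  intro i j k h
  rw [mkLaw_bVec] at h
  by_cases hij : c i j k = 0
  · have hji : c j i k ≠ 0 := fun hji ↦ h (by rw [hij, hji, sub_zero])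
    rw [hc j i k hji, add_comm]
  · exact hc i j k hij

theorem IsGradedBy.map {B F : Type*} [Add A] [Add B] [FunLike F A B] [AddHomClass F A B]
    {d : Fin n → A} (hd : IsGradedBy μ d) (f : F) : IsGradedBy μ fun i ↦ f (d i) :=
  fun _ _ _ h ↦ (congrArg f (hd h)).trans (map_add f _ _)

theorem IsGradedBy.isDerivation_diagonal {d : Fin n → ℝ} (hd : IsGradedBy μ d)
    (hμ : IsBilin μ) : IsDerivation μ (diagonal d) := by
  intro X Y
  funext k
  rw [Pi.add_apply, mulVec_diagonal, hμ.apply_eq_sum X Y, hμ.apply_eq_sum (diagonal d *ᵥ X) Y,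
    hμ.apply_eq_sum X (diagonal d *ᵥ Y)]
  simp only [mulVec_diagonal, Finset.mul_sum, ← Finset.sum_add_distrib]
  refine Finset.sum_congr rfl fun i _ ↦ Finset.sum_congr rfl fun j _ ↦ ?_
  by_cases h : μ (bVec i) (bVec j) k = 0
  · simp only [h, mul_zero, add_zero]
  · rw [hd h]
    ring

/-- The span of the `e_i` with `k < d i`: the descending filtration of `ℝ^n` by degree. -/
def degreeFiltration (d : Fin n → ℕ) (k : ℕ) : Submodule ℝ (Fin n → ℝ) :=
  Submodule.pi {i | d i ≤ k} fun _ ↦ ⊥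

theorem mem_degreeFiltration {d : Fin n → ℕ} {k : ℕ} {v : Fin n → ℝ} :
    v ∈ degreeFiltration d k ↔ ∀ i, d i ≤ k → v i = 0 := by
  simp [degreeFiltration]

theorem IsGradedBy.lcs_le_degreeFiltration {d : Fin n → ℕ} (hd : IsGradedBy μ d)
    (hμ : IsBilin μ) (hpos : ∀ i, 0 < d i) (k : ℕ) : lcs μ k ≤ degreeFiltration d k := by
  induction k with
  | zero => exact fun v _ ↦ mem_degreeFiltration.2 fun i hi ↦ absurd hi (hpos i).not_ge
  | succ k ih =>
    rw [lcs, Submodule.span_le]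
    rintro _ ⟨x, y, hy, rfl⟩
    refine mem_degreeFiltration.2 fun l hl ↦ ?_
    rw [hμ.apply_eq_sum]
    refine Finset.sum_eq_zero fun i _ ↦ Finset.sum_eq_zero fun j _ ↦ ?_
    by_cases h : μ (bVec i) (bVec j) l = 0
    · rw [h, mul_zero]
    · have hj : d j ≤ k := by have := hd h; have := hpos i; omega
      rw [mem_degreeFiltration.1 (ih hy) j hj, mul_zero, zero_mul]

theorem IsGradedBy.exists_lcs_eq_bot {d : Fin n → ℕ} (hd : IsGradedBy μ d)
    (hμ : IsBilin μ) (hpos : ∀ i, 0 < d i) : ∃ k, lcs μ k = ⊥ := by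
  refine ⟨Finset.univ.sup d, eq_bot_iff.2 fun v hv ↦ (Submodule.mem_bot ℝ).2 (funext fun i ↦ ?_)⟩
  exact mem_degreeFiltration.1 (hd.lcs_le_degreeFiltration hμ hpos _ hv) i
    (Finset.le_sup (Finset.mem_univ i))

theorem IsGradedBy.momentMap_apply_eq_zero [Add A] [IsRightCancelAdd A] {d : Fin n → A}
    (hd : IsGradedBy μ d) {k l : Fin n} (hkl : d k ≠ d l) : momentMap μ k l = 0 := by
  have inputs (i j) : μ (bVec k) (bVec i) j * μ (bVec l) (bVec i) j = 0 := by
    by_contra h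
    exact hkl (add_right_cancel
      ((hd (left_ne_zero_of_mul h)).symm.trans (hd (right_ne_zero_of_mul h))))
  have outputs (i j) : μ (bVec i) (bVec j) k * μ (bVec i) (bVec j) l = 0 := by
    by_contra h
    exact hkl ((hd (left_ne_zero_of_mul h)).trans (hd (right_ne_zero_of_mul h)).symm)
  simp only [momentMap, of_apply, inputs, outputs, Finset.sum_const_zero, mul_zero, add_zero]

theorem momentMap_apply_self (μ : Law n) (k : Fin n) :
    momentMap μ k k =
      ∑ i, ∑ j, μ (bVec i) (bVec j) k ^ 2 - 2 * ∑ i, ∑ j, μ (bVec k) (bVec i) j ^ 2 := by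
  simp only [momentMap, of_apply, ← pow_two]
  ring

theorem IsGradedBy.momentMap_eq_diagonal [Add A] [IsRightCancelAdd A] {d : Fin n → A}
    (hd : IsGradedBy μ d) (hinj : Function.Injective d) :
    momentMap μ = diagonal fun k ↦ momentMap μ k k := by
  ext k l
  rcases eq_or_ne k l with rfl | hkl
  · rw [diagonal_apply_eq]
  · rw [diagonal_apply_ne _ hkl, hd.momentMap_apply_eq_zero (hinj.ne hkl)]

end Grading

section LawTilde

/-- Degrees of the canonical basis for which `lawTilde` is graded. They come from assigning to `e₁`,
`e₂` free degrees `a`, `b`: the only relation imposed by the brackets is `3a + b = a + 3b`, from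
`[e₁, e₅]` and `[e₂, e₄]`, and it holds for `a = (1, 0)`, `b = (1, 1)`. -/
def degTilde : Fin 7 → ℕ × ZMod 2 :=
  ![(1, 0), (1, 1), (2, 1), (3, 0), (3, 1), (4, 1), (5, 0)]

theorem isGradedBy_degTilde : IsGradedBy lawTilde degTilde := by
  refine isGradedBy_mkLaw fun i j k h ↦ ?_
  have eq_of_single_ne_zero {l : Fin 7} {a : ℝ} (h : (Pi.single l a : Fin 7 → ℝ) k ≠ 0) :
      k = l := by
    by_contra hkl
    exact h (Pi.single_eq_of_ne (M := fun _ ↦ ℝ) hkl a)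
  unfold cTilde at h
  split_ifs at h with hij hij hij hij hij hij hij
  case neg => exact absurd rfl h
  all_goals
    obtain ⟨rfl, rfl⟩ := hij
    obtain rfl := eq_of_single_ne_zero h
    decide

theorem degTilde_injective : Function.Injective degTilde := by decide

theorem isBilin_lawTilde : IsBilin lawTilde := isBilin_mkLaw cTilde

theorem isGradedBy_degTilde_fst : IsGradedBy lawTilde fun i ↦ (degTilde i).1 :=
  isGradedBy_degTilde.map (AddMonoidHom.fst ℕ (ZMod 2))

theorem isDerivation_lawTilde :
    IsDerivation lawTilde (diagonal ![1, 1, 2, 3, 3, 4, 5]) := by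
  have hdeg : (fun i ↦ ((degTilde i).1 : ℝ)) = ![1, 1, 2, 3, 3, 4, 5] := by
    funext i
    fin_cases i <;> simp [degTilde]
  rw [← hdeg]
  exact (isGradedBy_degTilde_fst.map (Nat.castAddMonoidHom ℝ)).isDerivation_diagonal
    isBilin_lawTilde

theorem lawTilde_apply (X Y : Fin 7 → ℝ) :
    lawTilde X Y =
      ![0, 0,
        √611 / 94 * (X 0 * Y 1 - X 1 * Y 0),
        √235 / 94 * (X 1 * Y 2 - X 2 * Y 1),
        √235 / 47 * (X 0 * Y 2 - X 2 * Y 0),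
        √611 / 94 * ((X 0 * Y 4 - X 4 * Y 0) + (X 1 * Y 3 - X 3 * Y 1)),
        √705 / 94 * ((X 1 * Y 5 - X 5 * Y 1) - (X 2 * Y 4 - X 4 * Y 2))] := by
  funext k
  fin_cases k <;> simp [lawTilde, mkLaw, cTilde, Fin.sum_univ_seven] <;> ring

-- On distinct basis vectors the only nonzero terms, up to sign, are `[[e₁, e₂], e₅]` and
-- `[[e₅, e₁], e₂]`, which cancel.
theorem isJacobi_lawTilde : IsJacobi lawTilde := by
  intro X Y Z
  simp only [lawTilde_apply]
  funext k
  fin_cases k <;> simp <;> ring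

theorem isNilpotentLaw_lawTilde : IsNilpotentLaw lawTilde :=
  ⟨⟨isBilin_lawTilde, isSkew_mkLaw cTilde, isJacobi_lawTilde⟩,
    isGradedBy_degTilde_fst.exists_lcs_eq_bot isBilin_lawTilde (by decide)⟩

theorem momentMap_lawTilde :
    momentMap lawTilde =
      diagonal ![-23/47, -23/47, -27/94, -4/47, -4/47, 11/94, 15/47] := by
  have h611 : √611 ^ 2 = 611 := Real.sq_sqrt (by norm_num)
  have h235 : √235 ^ 2 = 235 := Real.sq_sqrt (by norm_num)
  have h705 : √705 ^ 2 = 705 := Real.sq_sqrt (by norm_num)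
  rw [isGradedBy_degTilde.momentMap_eq_diagonal degTilde_injective]
  congr 1
  funext k
  rw [momentMap_apply_self]
  fin_cases k <;>
    simp [lawTilde_apply, bVec, Fin.sum_univ_seven, div_pow, h611, h235, h705] <;> norm_num

theorem momentMap_lawTilde_eq_smul_one_add :
    momentMap lawTilde =
      (-(65/94) : ℝ) • (1 : Matrix (Fin 7) (Fin 7) ℝ) +
        (19/94 : ℝ) • diagonal ![1, 1, 2, 3, 3, 4, 5] := by
  rw [momentMap_lawTilde, smul_one_eq_diagonal, ← diagonal_smul, diagonal_add]
  congr 1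
  funext k
  fin_cases k <;> norm_num

end LawTilde

/-- `μ̃` is a nilpotent Lie algebra law, `diag(1,1,2,3,3,4,5)` is a
derivation of it, its moment map is the prescribed diagonal matrix
`−(65/94)I + (19/94)D`, and `μ̃` is an Einstein nilradical. -/
theorem stmt_4 :
    IsJacobi lawTilde ∧ IsNilpotentLaw lawTilde ∧
    IsDerivation lawTilde (Matrix.diagonal (![1, 1, 2, 3, 3, 4, 5] : Fin 7 → ℝ)) ∧
    momentMap lawTilde =
      Matrix.diagonal (![-23/47, -23/47, -27/94, -4/47, -4/47, 11/94, 15/47] : Fin 7 → ℝ) ∧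
    momentMap lawTilde =
      (-(65/94) : ℝ) • (1 : Matrix (Fin 7) (Fin 7) ℝ) +
        (19/94 : ℝ) • Matrix.diagonal (![1, 1, 2, 3, 3, 4, 5] : Fin 7 → ℝ) ∧
    IsEinsteinNilradical lawTilde := by
  have hder := isDerivation_lawTilde
  have hm := momentMap_lawTilde_eq_smul_one_add
  exact ⟨isJacobi_lawTilde, isNilpotentLaw_lawTilde, hder, momentMap_lawTilde, hm,
    isEinsteinNilradical_of_momentMap_eq (by norm_num) ((isSymm_diagonal _).smul _)
      (hder.smul isBilin_lawTilde _) hm⟩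
end
end

section
/- Let μ be the Lie algebra law of g_{2.2} and μ̃₀ the law on ℝ⁷ with nonzero brackets [e_1,e_2]=e_5, [e_1,e_3]=e_6, [e_1,e_4]=2e_7, [e_2,e_3]=e_4, [e_2,e_6]=e_7, [e_3,e_5]=−e_7. Then the space of derivations of (ℝ⁷,μ) has dimension 15, the space of derivations of (ℝ⁷,μ̃₀) has dimension 17, and consequently the Lie algebras (ℝ⁷,μ) and (ℝ⁷,μ̃₀) are not isomorphic. -/
open Matrix BigOperators Polynomial

noncomputable section

/-- structure constants of `g_{2.2}`. -/
def c22 : Fin 7 → Fin 7 → Fin 7 → ℝ := fun i j =>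
  if i = 0 ∧ j = 1 then Pi.single 4 1
  else if i = 0 ∧ j = 2 then Pi.single 5 1
  else if i = 0 ∧ j = 3 then Pi.single 6 2
  else if i = 1 ∧ j = 2 then Pi.single 3 1
  else if i = 1 ∧ j = 5 then Pi.single 6 1
  else if i = 2 ∧ j = 4 then Pi.single 6 (-1)
  else if i = 2 ∧ j = 5 then Pi.single 6 1
  else 0

/-- the Lie algebra law of `g_{2.2}`. -/
def law22 : Law 7 := mkLaw c22

/-- structure constants of the degeneration `μ̃₀` of `g_{2.2}`. -/
def c22t : Fin 7 → Fin 7 → Fin 7 → ℝ := fun i j =>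
  if i = 0 ∧ j = 1 then Pi.single 4 1
  else if i = 0 ∧ j = 2 then Pi.single 5 1
  else if i = 0 ∧ j = 3 then Pi.single 6 2
  else if i = 1 ∧ j = 2 then Pi.single 3 1
  else if i = 1 ∧ j = 5 then Pi.single 6 1
  else if i = 2 ∧ j = 4 then Pi.single 6 (-1)
  else 0

/-- the law `μ̃₀`. -/
def law22t : Law 7 := mkLaw c22t

/-! The brackets of both algebras have the form
`[(x, u, s), (y, v, r)] = (0, x × y, v · γx - u · γy)` on `K³ × K³ × K` for a `3 × 3` matrix `γ`:
the first layer generates the algebra, the second is its exterior square, and `γ` pairs the two.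
A derivation is therefore determined by its restriction to the first layer, `x ↦ (Ax, f x)`. It acts
on the second layer through `Λ²A = tr A - Aᵀ` and on the third through a scalar `t`; compatibility
with the pairing reads `γA - Aγ = (t - tr A) γ`. If `tr γ² ≠ 0`, multiplying by `γ` and taking
traces gives `t = tr A`, so `A` commutes with `γ`. Conversely every such `A` and every
`f : K³ → K³ × K` occur, so the derivations have dimension `dim (centralizer γ) + 12`. For `g_{2.2}`
the matrix `γ` is `[2]` plus a Jordan block of size two, with centralizer of dimension `3`; for its
degeneration `γ` is `diag (2, -1, -1)`, with centralizer of dimension `5`. -/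

section Derivations

variable {R V : Type*} [CommRing R] [AddCommGroup V] [Module R V]

/-- The derivations of an algebra, not necessarily associative or Lie, whose product is the bilinear
map `B`. -/
def derivationSubmodule (B : V →ₗ[R] V →ₗ[R] V) : Submodule R (Module.End R V) where
  carrier := {ψ | ∀ X Y, ψ (B X Y) = B (ψ X) Y + B X (ψ Y)}
  zero_mem' := by simp
  add_mem' hφ hψ X Y := by
    simp only [LinearMap.add_apply, map_add, hφ X Y, hψ X Y]
    abel
  smul_mem' c ψ hψ X Y := by simp [hψ X Y]

lemma mem_derivationSubmodule {B : V →ₗ[R] V →ₗ[R] V} {ψ : Module.End R V} :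
    ψ ∈ derivationSubmodule B ↔ ∀ X Y, ψ (B X Y) = B (ψ X) Y + B X (ψ Y) :=
  Iff.rfl

end Derivations

section Transport

variable {n : ℕ} {V : Type*} [AddCommGroup V] [Module ℝ V] {μ : Law n} {B : V →ₗ[ℝ] V →ₗ[ℝ] V}

lemma isDerivation_iff_conj_mem_derivationSubmodule (e : (Fin n → ℝ) ≃ₗ[ℝ] V)
    (he : ∀ X Y, e (μ X Y) = B (e X) (e Y)) (ψ : Matrix (Fin n) (Fin n) ℝ) :
    IsDerivation μ ψ ↔ e.conj (Matrix.toLin' ψ) ∈ derivationSubmodule B := by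
  rw [mem_derivationSubmodule, ← e.forall_congr_right]
  refine forall_congr' fun X ↦ ?_
  rw [← e.forall_congr_right]
  refine forall_congr' fun Y ↦ ?_
  simp [LinearEquiv.conj_apply, ← he, ← map_add]

lemma finrank_span_isDerivation (e : (Fin n → ℝ) ≃ₗ[ℝ] V)
    (he : ∀ X Y, e (μ X Y) = B (e X) (e Y)) :
    Module.finrank ℝ (Submodule.span ℝ {ψ : Matrix (Fin n) (Fin n) ℝ | IsDerivation μ ψ}) =
      Module.finrank ℝ (derivationSubmodule B) := by
  let L := Matrix.toLin' ≪≫ₗ e.conj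
  have setOf_eq : {ψ : Matrix (Fin n) (Fin n) ℝ | IsDerivation μ ψ} =
      (derivationSubmodule B).comap L.toLinearMap :=
    Set.ext (isDerivation_iff_conj_mem_derivationSubmodule e he)
  rw [setOf_eq, Submodule.span_eq]
  exact (L.ofSubmodule' (derivationSubmodule B)).finrank_eq

end Transport

section CrossProduct

variable {R : Type*} [CommRing R]

/-- The action `Λ²A` of an endomorphism `A` of `R³` on the exterior square `Λ²R³`, identified with
`R³` through the cross product. -/
def wedgeAction (A : Matrix (Fin 3) (Fin 3) R) : Matrix (Fin 3) (Fin 3) R :=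
  A.trace • 1 - Aᵀ

lemma wedgeAction_mulVec_cross (A : Matrix (Fin 3) (Fin 3) R) (x y : Fin 3 → R) :
    wedgeAction A *ᵥ (x ⨯₃ y) = (A *ᵥ x) ⨯₃ y + x ⨯₃ (A *ᵥ y) := by
  ext i
  fin_cases i <;>
    simp [wedgeAction, cross_apply, Matrix.mulVec, dotProduct, Matrix.trace,
      Fin.sum_univ_three] <;> ring

lemma wedgeAction_mulVec_dotProduct (A : Matrix (Fin 3) (Fin 3) R) (v w : Fin 3 → R) :
    wedgeAction A *ᵥ v ⬝ᵥ w = A.trace * (v ⬝ᵥ w) - v ⬝ᵥ A *ᵥ w := by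
  simp [wedgeAction, Matrix.sub_mulVec, Matrix.smul_mulVec, Matrix.mulVec_transpose,
    Matrix.dotProduct_mulVec]

lemma linearMap_ext_cross {M : Type*} [AddCommGroup M] [Module R M] {f g : (Fin 3 → R) →ₗ[R] M}
    (h : ∀ x y, f (x ⨯₃ y) = g (x ⨯₃ y)) : f = g := by
  refine (Pi.basisFun R (Fin 3)).ext fun i ↦ ?_
  have single_eq_cross : (Pi.single i 1 : Fin 3 → R) =
      Pi.single (i + 1) 1 ⨯₃ Pi.single (i + 2) 1 := by
    ext j
    fin_cases i <;> fin_cases j <;> simp [cross_apply]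
  rw [Pi.basisFun_apply, single_eq_cross, h]

lemma exists_eq_dotProduct_cross {B : (Fin 3 → R) →ₗ[R] (Fin 3 → R) →ₗ[R] R} (hB : B.IsAlt) :
    ∃ d : Fin 3 → R, ∀ x y, B x y = d ⬝ᵥ x ⨯₃ y := by
  let e (i : Fin 3) : Fin 3 → R := Pi.single i 1
  refine ⟨![B (e 1) (e 2), B (e 2) (e 0), B (e 0) (e 1)], fun x y ↦ ?_⟩
  have expand (z : Fin 3 → R) : z = z 0 • e 0 + z 1 • e 1 + z 2 • e 2 := by
    ext i
    fin_cases i <;> simp [e]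
  have swap (i j : Fin 3) : B (e i) (e j) = -B (e j) (e i) := (hB.neg _ _).symm
  conv_lhs => rw [expand x, expand y]
  simp only [map_add, map_smul, LinearMap.add_apply, LinearMap.smul_apply, hB.self_eq_zero,
    swap 1 0, swap 2 1, swap 0 2, smul_eq_mul, cross_apply, vec3_dotProduct, Matrix.cons_val]
  ring

lemma exists_dotProduct_cross_eq_pairing_sub (γ : Matrix (Fin 3) (Fin 3) R)
    (g : (Fin 3 → R) →ₗ[R] (Fin 3 → R)) :
    ∃ d : Fin 3 → R, ∀ x y, d ⬝ᵥ x ⨯₃ y = g y ⬝ᵥ γ *ᵥ x - g x ⬝ᵥ γ *ᵥ y := by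
  let pairing : (Fin 3 → R) →ₗ[R] (Fin 3 → R) →ₗ[R] R :=
    (dotProductBilin R R).compl₁₂ g γ.mulVecLin
  have pairing_apply (x y : Fin 3 → R) : pairing x y = g x ⬝ᵥ γ *ᵥ y := rfl
  have isAlt : (pairing.flip - pairing).IsAlt := fun x ↦ sub_self (pairing x x)
  obtain ⟨d, hd⟩ := exists_eq_dotProduct_cross isAlt
  exact ⟨d, fun x y ↦ by simp [← hd, pairing_apply]⟩

end CrossProduct

section PairingBracket

/-- The underlying space of a three-generated algebra graded in degrees `1`, `2`, `3`, whose second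
layer is the exterior square of the first, identified with `R³` by the cross product, and whose
third layer is a line. -/
abbrev Layers (R : Type*) := (Fin 3 → R) × (Fin 3 → R) × R

/-- The graded bracket on `Layers R` in which `γ` encodes the pairing of the first two layers. The
Jacobi identity, which amounts to `γ.trace = 0`, is not imposed. -/
def pairingBracket {R : Type*} [CommRing R] (γ : Matrix (Fin 3) (Fin 3) R) :
    Layers R →ₗ[R] Layers R →ₗ[R] Layers R :=
  LinearMap.mk₂ R
    (fun X Y ↦ (0, X.1 ⨯₃ Y.1, Y.2.1 ⬝ᵥ γ *ᵥ X.1 - X.2.1 ⬝ᵥ γ *ᵥ Y.1))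
    (fun X X' Y ↦ by ext <;> simp [Matrix.mulVec_add]; ring)
    (fun c X Y ↦ by ext <;> simp [Matrix.mulVec_smul, mul_sub])
    (fun X Y Y' ↦ by ext <;> simp [Matrix.mulVec_add]; ring)
    (fun c X Y ↦ by ext <;> simp [Matrix.mulVec_smul, mul_sub])

section CommRing

variable {R : Type*} [CommRing R] {γ : Matrix (Fin 3) (Fin 3) R} {ψ : Module.End R (Layers R)}

lemma pairingBracket_apply (X Y : Layers R) :
    pairingBracket γ X Y = (0, X.1 ⨯₃ Y.1, Y.2.1 ⬝ᵥ γ *ᵥ X.1 - X.2.1 ⬝ᵥ γ *ᵥ Y.1) :=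
  rfl

lemma pairingBracket_generators (x y : Fin 3 → R) :
    pairingBracket γ (x, 0) (y, 0) = (0, x ⨯₃ y, 0) := by
  simp [pairingBracket_apply]

lemma pairingBracket_generator_wedge (x v : Fin 3 → R) :
    pairingBracket γ (x, 0) (0, v, 0) = (v ⬝ᵥ γ *ᵥ x) • (0, 0, 1) := by
  simp [pairingBracket_apply]

/-- The matrix of the endomorphism that `ψ` induces on the generating layer. -/
def generatorMatrix : Module.End R (Layers R) →ₗ[R] Matrix (Fin 3) (Fin 3) R :=
  LinearMap.toMatrix'.toLinearMap ∘ₗ LinearMap.compRight R (LinearMap.fst R _ _) ∘ₗ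
    LinearMap.lcomp R _ (LinearMap.inl R _ _)

lemma generatorMatrix_mulVec (ψ : Module.End R (Layers R)) (x : Fin 3 → R) :
    generatorMatrix ψ *ᵥ x = (ψ (x, 0)).1 := by
  simp [generatorMatrix, LinearMap.toMatrix'_mulVec]

lemma wedge_component_of_mem_derivationSubmodule
    (hψ : ψ ∈ derivationSubmodule (pairingBracket γ)) (v : Fin 3 → R) :
    (ψ (0, v, 0)).2.1 = wedgeAction (generatorMatrix ψ) *ᵥ v := by
  let wedgePart : (Fin 3 → R) →ₗ[R] (Fin 3 → R) :=
    LinearMap.fst R _ _ ∘ₗ LinearMap.snd R _ _ ∘ₗ ψ ∘ₗ LinearMap.inr R _ _ ∘ₗ LinearMap.inl R _ _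
  suffices wedgePart = (wedgeAction (generatorMatrix ψ)).mulVecLin from
    LinearMap.congr_fun this v
  refine linearMap_ext_cross fun x y ↦ ?_
  have leibniz := congrArg (fun Z ↦ Z.2.1) (hψ (x, 0) (y, 0))
  rw [pairingBracket_generators] at leibniz
  simpa [wedgePart, pairingBracket_apply, wedgeAction_mulVec_cross, generatorMatrix_mulVec]
    using leibniz

lemma commutator_generatorMatrix_of_mem_derivationSubmodule
    (hψ : ψ ∈ derivationSubmodule (pairingBracket γ)) :
    γ * generatorMatrix ψ - generatorMatrix ψ * γ =
      ((ψ (0, 0, 1)).2.2 - (generatorMatrix ψ).trace) • γ := by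
  set A := generatorMatrix ψ with hA
  refine Matrix.ext_iff_mulVec.mpr fun x ↦ dotProduct_eq _ _ fun v ↦ ?_
  have leibniz := congrArg (fun Z ↦ Z.2.2) (hψ (x, 0) (0, v, 0))
  rw [pairingBracket_generator_wedge, map_smul] at leibniz
  simp only [pairingBracket_apply, wedge_component_of_mem_derivationSubmodule hψ,
    ← generatorMatrix_mulVec, ← hA, wedgeAction_mulVec_dotProduct, Prod.smul_snd, Prod.snd_add,
    Prod.fst_zero, smul_eq_mul, Matrix.mulVec_zero, dotProduct_zero, zero_dotProduct,
    sub_zero] at leibniz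
  simp only [dotProduct_comm _ v, Matrix.sub_mulVec, dotProduct_sub, Matrix.smul_mulVec,
    dotProduct_smul, ← Matrix.mulVec_mulVec, smul_eq_mul]
  linear_combination -leibniz

lemma exists_mem_derivationSubmodule_extending {A : Matrix (Fin 3) (Fin 3) R}
    (hA : Commute γ A) (f : (Fin 3 → R) →ₗ[R] (Fin 3 → R) × R) :
    ∃ ψ ∈ derivationSubmodule (pairingBracket γ), ∀ x, ψ (x, 0) = (A *ᵥ x, f x) := by
  obtain ⟨d, hd⟩ := exists_dotProduct_cross_eq_pairing_sub γ (LinearMap.fst R _ _ ∘ₗ f)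
  let ψ : Module.End R (Layers R) :=
    { toFun X := (A *ᵥ X.1, (f X.1).1 + wedgeAction A *ᵥ X.2.1,
        (f X.1).2 + d ⬝ᵥ X.2.1 + A.trace * X.2.2)
      map_add' X Y := by ext <;> simp [Matrix.mulVec_add] <;> ring
      map_smul' c X := by ext <;> simp [Matrix.mulVec_smul]; ring }
  have hψ (X : Layers R) : ψ X = (A *ᵥ X.1, (f X.1).1 + wedgeAction A *ᵥ X.2.1,
    (f X.1).2 + d ⬝ᵥ X.2.1 + A.trace * X.2.2) := rfl
  refine ⟨ψ, fun X Y ↦ ?_, fun x ↦ by simp [hψ]⟩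
  have hγA (z : Fin 3 → R) : γ *ᵥ A *ᵥ z = A *ᵥ γ *ᵥ z := by
    rw [Matrix.mulVec_mulVec, hA.eq, Matrix.mulVec_mulVec]
  simp only [hψ, pairingBracket_apply, Prod.mk_add_mk, Matrix.mulVec_zero, map_zero, Prod.fst_zero,
    Prod.snd_zero, zero_add, wedgeAction_mulVec_cross, hd, LinearMap.comp_apply,
    LinearMap.fst_apply, hγA, add_dotProduct, wedgeAction_mulVec_dotProduct]
  refine Prod.ext rfl (Prod.ext rfl ?_)
  ring

end CommRing

section Field

variable {K : Type*} [Field K] {γ : Matrix (Fin 3) (Fin 3) K} {ψ : Module.End K (Layers K)}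

lemma commute_generatorMatrix_of_mem_derivationSubmodule (hγ : (γ * γ).trace ≠ 0)
    (hψ : ψ ∈ derivationSubmodule (pairingBracket γ)) : Commute γ (generatorMatrix ψ) := by
  set A := generatorMatrix ψ
  have hcomm : γ * A - A * γ = ((ψ (0, 0, 1)).2.2 - A.trace) • γ :=
    commutator_generatorMatrix_of_mem_derivationSubmodule hψ
  have htrace : ((ψ (0, 0, 1)).2.2 - A.trace) * (γ * γ).trace = 0 :=
    calc ((ψ (0, 0, 1)).2.2 - A.trace) * (γ * γ).trace
      _ = (γ * (γ * A - A * γ)).trace := by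
        rw [hcomm, Matrix.mul_smul, Matrix.trace_smul, smul_eq_mul]
      _ = 0 := by
        rw [mul_sub, Matrix.trace_sub, ← mul_assoc γ A γ, Matrix.trace_mul_comm (γ * A) γ, sub_self]
  rw [(mul_eq_zero.mp htrace).resolve_right hγ, zero_smul] at hcomm
  exact sub_eq_zero.mp hcomm

lemma eq_zero_of_mem_derivationSubmodule_of_generators (hγ : γ ≠ 0)
    (hψ : ψ ∈ derivationSubmodule (pairingBracket γ)) (hgen : ∀ x, ψ (x, 0) = 0) : ψ = 0 := by
  have wedge_eq_zero : ψ ∘ₗ LinearMap.inr K _ _ ∘ₗ LinearMap.inl K _ _ = 0 := by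
    refine linearMap_ext_cross fun x y ↦ ?_
    have leibniz := hψ (x, 0) (y, 0)
    rw [pairingBracket_generators] at leibniz
    simpa [hgen] using leibniz
  have wedge_apply (v : Fin 3 → K) : ψ (0, v, 0) = 0 := LinearMap.congr_fun wedge_eq_zero v
  have top_apply : ψ (0, 0, 1) = 0 := by
    obtain ⟨i, j, hij⟩ : ∃ i j, γ i j ≠ 0 := by
      contrapose! hγ
      exact Matrix.ext hγ
    have leibniz := hψ (Pi.single j 1, 0) (0, Pi.single i 1, 0)
    rw [pairingBracket_generator_wedge, map_smul, hgen, wedge_apply] at leibniz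
    simpa [hij] using leibniz
  refine LinearMap.ext fun ⟨x, v, s⟩ ↦ ?_
  have decompose : ((x, v, s) : Layers K) = (x, 0) + (0, v, 0) + s • (0, 0, 1) := by simp
  rw [decompose, map_add, map_add, map_smul, hgen, wedge_apply, top_apply]
  simp

/-- Restriction of a derivation to the generating layer, split into the induced endomorphism of that
layer and the component in the higher layers. -/
def derivationRestrict (hγ : (γ * γ).trace ≠ 0) :
    derivationSubmodule (pairingBracket γ) →ₗ[K]
      Subalgebra.centralizer K {γ} × ((Fin 3 → K) →ₗ[K] (Fin 3 → K) × K) :=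
  LinearMap.prod
    (LinearMap.codRestrict (Subalgebra.toSubmodule (Subalgebra.centralizer K {γ}))
      (generatorMatrix ∘ₗ Submodule.subtype _) fun ψ ↦ by
        simpa [Subalgebra.mem_centralizer_iff] using
          (commute_generatorMatrix_of_mem_derivationSubmodule hγ ψ.2).eq)
    (LinearMap.compRight K (LinearMap.snd K _ _) ∘ₗ LinearMap.lcomp K _ (LinearMap.inl K _ _) ∘ₗ
      Submodule.subtype _)

lemma derivationRestrict_eq_iff (hγ : (γ * γ).trace ≠ 0)
    {ψ : derivationSubmodule (pairingBracket γ)}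
    {p : Subalgebra.centralizer K {γ} × ((Fin 3 → K) →ₗ[K] (Fin 3 → K) × K)} :
    derivationRestrict hγ ψ = p ↔ ∀ x, ψ.1 (x, 0) = (p.1.1 *ᵥ x, p.2 x) := by
  simp only [Prod.ext_iff, Subtype.ext_iff, Matrix.ext_iff_mulVec, LinearMap.ext_iff, forall_and,
    ← generatorMatrix_mulVec]
  rfl

lemma derivationRestrict_bijective (hγ : (γ * γ).trace ≠ 0) :
    Function.Bijective (derivationRestrict hγ) := by
  constructor
  · refine (injective_iff_map_eq_zero _).mpr fun ψ hψ ↦ Subtype.ext ?_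
    have γ_ne_zero : γ ≠ 0 := by
      rintro rfl
      simp at hγ
    refine eq_zero_of_mem_derivationSubmodule_of_generators γ_ne_zero ψ.2 fun x ↦ ?_
    rw [(derivationRestrict_eq_iff hγ).mp hψ x]
    simp
  · rintro ⟨⟨A, hA⟩, f⟩
    obtain ⟨ψ, hψ, hψ_gen⟩ := exists_mem_derivationSubmodule_extending
      ((Subalgebra.mem_centralizer_iff K).mp hA γ rfl) f
    exact ⟨⟨ψ, hψ⟩, (derivationRestrict_eq_iff hγ).mpr hψ_gen⟩

theorem finrank_derivationSubmodule_pairingBracket (hγ : (γ * γ).trace ≠ 0) :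
    Module.finrank K (derivationSubmodule (pairingBracket γ)) =
      Module.finrank K (Subalgebra.centralizer K {γ}) + 12 := by
  rw [(LinearEquiv.ofBijective _ (derivationRestrict_bijective hγ)).finrank_eq,
    Module.finrank_prod, Module.finrank_linearMap]
  simp

end Field

end PairingBracket

section JordanPairing

variable {K : Type*} [Field K] {a b c : K}

/-- The pairing `[a] ⊕ [b, c; 0, b]`, which gives `g_{2.2}` for `(a, b, c) = (2, -1, -1)` and its
degeneration `μ̃₀` for `(a, b, c) = (2, -1, 0)`. -/
def jordanPairing (a b c : K) : Matrix (Fin 3) (Fin 3) K :=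
  !![a, 0, 0; 0, b, c; 0, 0, b]

lemma trace_jordanPairing_mul_self (a b c : K) :
    (jordanPairing a b c * jordanPairing a b c).trace = a ^ 2 + 2 * b ^ 2 := by
  simp [jordanPairing, Matrix.trace, Fin.sum_univ_three]
  ring

lemma dotProduct_jordanPairing_mulVec (v x : Fin 3 → K) :
    v ⬝ᵥ jordanPairing a b c *ᵥ x =
      a * (v 0 * x 0) + b * (v 1 * x 1 + v 2 * x 2) + c * (v 1 * x 2) := by
  simp [jordanPairing, Matrix.mulVec, dotProduct, Fin.sum_univ_three]
  ring

lemma mem_centralizer_jordanPairing_iff (hab : a ≠ b) {C : Matrix (Fin 3) (Fin 3) K} :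
    C ∈ Subalgebra.centralizer K {jordanPairing a b c} ↔
      C 0 1 = 0 ∧ C 0 2 = 0 ∧ C 1 0 = 0 ∧ C 2 0 = 0 ∧ (c = 0 ∨ C 2 1 = 0 ∧ C 2 2 = C 1 1) := by
  have mem_iff_entries : C ∈ Subalgebra.centralizer K {jordanPairing a b c} ↔
      (a * C 0 0 = C 0 0 * a ∧ a * C 0 1 = C 0 1 * b ∧ a * C 0 2 = C 0 1 * c + C 0 2 * b) ∧
      (b * C 1 0 + c * C 2 0 = C 1 0 * a ∧ b * C 1 1 + c * C 2 1 = C 1 1 * b ∧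
        b * C 1 2 + c * C 2 2 = C 1 1 * c + C 1 2 * b) ∧
      b * C 2 0 = C 2 0 * a ∧ b * C 2 1 = C 2 1 * b ∧ b * C 2 2 = C 2 1 * c + C 2 2 * b := by
    simp only [Subalgebra.mem_centralizer_iff, Set.mem_singleton_iff, forall_eq]
    rw [← Matrix.ext_iff]
    simp [jordanPairing, Matrix.mul_apply, Fin.sum_univ_three, Fin.forall_fin_succ]
  rw [mem_iff_entries]
  grind

lemma finrank_centralizer_jordanPairing_of_ne_zero (hab : a ≠ b) (hc : c ≠ 0) :
    Module.finrank K (Subalgebra.centralizer K {jordanPairing a b c}) = 3 := by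
  let e : Subalgebra.centralizer K {jordanPairing a b c} ≃ₗ[K] (Fin 3 → K) :=
    { toFun C := ![C.1 0 0, C.1 1 1, C.1 1 2]
      invFun p := ⟨!![p 0, 0, 0; 0, p 1, p 2; 0, 0, p 1], by
        simp [mem_centralizer_jordanPairing_iff hab]⟩
      map_add' C D := by simp
      map_smul' r C := by simp
      left_inv C := by
        have hC := (mem_centralizer_jordanPairing_iff hab).mp C.2
        simp only [hc, false_or] at hC
        ext i j
        fin_cases i <;> fin_cases j <;> simp [hC]
      right_inv p := by
        ext i
        fin_cases i <;> rfl }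
  simpa using e.finrank_eq

lemma finrank_centralizer_jordanPairing_zero (hab : a ≠ b) :
    Module.finrank K (Subalgebra.centralizer K {jordanPairing a b 0}) = 5 := by
  let e : Subalgebra.centralizer K {jordanPairing a b 0} ≃ₗ[K] (Fin 5 → K) :=
    { toFun C := ![C.1 0 0, C.1 1 1, C.1 1 2, C.1 2 1, C.1 2 2]
      invFun p := ⟨!![p 0, 0, 0; 0, p 1, p 2; 0, p 3, p 4], by
        simp [mem_centralizer_jordanPairing_iff hab]⟩
      map_add' C D := by simp
      map_smul' r C := by simp
      left_inv C := by
        have hC := (mem_centralizer_jordanPairing_iff hab).mp C.2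
        ext i j
        fin_cases i <;> fin_cases j <;> simp [hC]
      right_inv p := by
        ext i
        fin_cases i <;> rfl }
  simpa using e.finrank_eq

theorem finrank_derivationSubmodule_jordanPairing_of_ne_zero (htrace : a ^ 2 + 2 * b ^ 2 ≠ 0)
    (hab : a ≠ b) (hc : c ≠ 0) :
    Module.finrank K (derivationSubmodule (pairingBracket (jordanPairing a b c))) = 15 := by
  rw [← trace_jordanPairing_mul_self a b c] at htrace
  rw [finrank_derivationSubmodule_pairingBracket htrace,
    finrank_centralizer_jordanPairing_of_ne_zero hab hc]

theorem finrank_derivationSubmodule_jordanPairing_zero (htrace : a ^ 2 + 2 * b ^ 2 ≠ 0)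
    (hab : a ≠ b) :
    Module.finrank K (derivationSubmodule (pairingBracket (jordanPairing a b 0))) = 17 := by
  rw [← trace_jordanPairing_mul_self a b 0] at htrace
  rw [finrank_derivationSubmodule_pairingBracket htrace,
    finrank_centralizer_jordanPairing_zero hab]

end JordanPairing

section LawTwoTwo

/-- Coordinates of `ℝ⁷` adapted to the lower central series of `g_{2.2}`: the second layer is
spanned by `e₄ = [e₂, e₃]`, `-e₆ = [e₃, e₁]`, `e₅ = [e₁, e₂]`, ordered as in the cross product. -/
def layersEquiv : (Fin 7 → ℝ) ≃ₗ[ℝ] Layers ℝ where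
  toFun X := (![X 0, X 1, X 2], ![X 3, -X 5, X 4], X 6)
  invFun Z := ![Z.1 0, Z.1 1, Z.1 2, Z.2.1 0, Z.2.1 2, -Z.2.1 1, Z.2.2]
  map_add' X Y := by simp [add_comm]
  map_smul' r X := by simp
  left_inv X := by
    ext i
    fin_cases i <;> simp
  right_inv Z := by
    refine Prod.ext ?_ (Prod.ext ?_ rfl) <;> ext i <;> fin_cases i <;> simp

lemma law22_apply (X Y : Fin 7 → ℝ) :
    law22 X Y = ![0, 0, 0, X 1 * Y 2 - X 2 * Y 1, X 0 * Y 1 - X 1 * Y 0, X 0 * Y 2 - X 2 * Y 0,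
      2 * (X 0 * Y 3 - X 3 * Y 0) + (X 1 * Y 5 - X 5 * Y 1) - (X 2 * Y 4 - X 4 * Y 2)
        + (X 2 * Y 5 - X 5 * Y 2)] := by
  ext k
  fin_cases k <;> simp [law22, mkLaw, c22, Fin.sum_univ_seven] <;> ring

lemma law22t_apply (X Y : Fin 7 → ℝ) :
    law22t X Y = ![0, 0, 0, X 1 * Y 2 - X 2 * Y 1, X 0 * Y 1 - X 1 * Y 0, X 0 * Y 2 - X 2 * Y 0,
      2 * (X 0 * Y 3 - X 3 * Y 0) + (X 1 * Y 5 - X 5 * Y 1) - (X 2 * Y 4 - X 4 * Y 2)] := by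
  ext k
  fin_cases k <;> simp [law22t, mkLaw, c22t, Fin.sum_univ_seven] <;> ring

lemma layersEquiv_law22 (X Y : Fin 7 → ℝ) :
    layersEquiv (law22 X Y) =
      pairingBracket (jordanPairing 2 (-1) (-1)) (layersEquiv X) (layersEquiv Y) := by
  rw [pairingBracket_apply, dotProduct_jordanPairing_mulVec, dotProduct_jordanPairing_mulVec]
  simp [layersEquiv, law22_apply, cross_apply]
  ring

lemma layersEquiv_law22t (X Y : Fin 7 → ℝ) :
    layersEquiv (law22t X Y) =
      pairingBracket (jordanPairing 2 (-1) 0) (layersEquiv X) (layersEquiv Y) := by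
  rw [pairingBracket_apply, dotProduct_jordanPairing_mulVec, dotProduct_jordanPairing_mulVec]
  simp [layersEquiv, law22t_apply, cross_apply]
  ring

end LawTwoTwo

/-- the derivation algebras of `g_{2.2}` and of its degeneration
`μ̃₀` have dimensions 15 and 17 respectively; consequently the two Lie algebras
are not isomorphic. -/
theorem stmt_11 :
    Module.finrank ℝ
      (Submodule.span ℝ {ψ : Matrix (Fin 7) (Fin 7) ℝ | IsDerivation law22 ψ}) = 15 ∧
    Module.finrank ℝ
      (Submodule.span ℝ {ψ : Matrix (Fin 7) (Fin 7) ℝ | IsDerivation law22t ψ}) = 17 ∧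
    ¬ ∃ T : (Fin 7 → ℝ) ≃ₗ[ℝ] (Fin 7 → ℝ),
        ∀ x y, T (law22 x y) = law22t (T x) (T y) := by
  have finrank_eq_15 : Module.finrank ℝ
      (derivationSubmodule (pairingBracket (jordanPairing (2 : ℝ) (-1) (-1)))) = 15 :=
    finrank_derivationSubmodule_jordanPairing_of_ne_zero (by norm_num) (by norm_num) (by norm_num)
  have finrank_eq_17 : Module.finrank ℝ
      (derivationSubmodule (pairingBracket (jordanPairing (2 : ℝ) (-1) 0))) = 17 :=
    finrank_derivationSubmodule_jordanPairing_zero (by norm_num) (by norm_num)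
  have finrank_law22 := finrank_span_isDerivation layersEquiv layersEquiv_law22
  have finrank_law22t := finrank_span_isDerivation layersEquiv layersEquiv_law22t
  refine ⟨finrank_law22.trans finrank_eq_15, finrank_law22t.trans finrank_eq_17, ?_⟩
  rintro ⟨T, hT⟩
  have layersEquiv_T (X Y : Fin 7 → ℝ) : (T ≪≫ₗ layersEquiv) (law22 X Y) =
      pairingBracket (jordanPairing 2 (-1) 0)
        ((T ≪≫ₗ layersEquiv) X) ((T ≪≫ₗ layersEquiv) Y) := by
    simp [hT, layersEquiv_law22t]
  have finrank_law22_via_T := finrank_span_isDerivation (T ≪≫ₗ layersEquiv) layersEquiv_T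
  omega
end
end
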